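/- (Generalised Lanczos identity) Let X be a (2,2) double form on 4-dimensional Minkowski space which is irreducible in the sense that there exist signs ε, ε' ∈ {1, −1} with X_{cdab} = ε X_{abcd} and (→⋆X)_{cdab} = ε' (→⋆X)_{abcd} for all indices. Then for all a,b: X^{a k₁ k₂ k₃} X_{b k₁ k₂ k₃} = I δ^{a}_{b}, where I = (1/4) X_{pqrs} X^{pqrs} and all indices are raised with η. -/

import Mathlib

noncomputable section

/-- The Minkowski metric `η = diag(+1,−1,−1,−1)` on `ℝ⁴`.  Its inverse has the
same components, so `mink` is also used to raise indices. -/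
def mink : Fin 4 → Fin 4 → ℝ :=
  fun a b => if a = b then (if a = 0 then 1 else -1) else 0

/-- The totally antisymmetric Levi-Civita tensor with all indices down and
`ε₀₁₂₃ = +1`, via the Vandermonde-product formula. -/
def lev : Fin 4 → Fin 4 → Fin 4 → Fin 4 → ℝ :=
  fun a b c d =>
    (((b : ℕ) : ℝ) - ((a : ℕ) : ℝ)) * (((c : ℕ) : ℝ) - ((a : ℕ) : ℝ)) *
    (((d : ℕ) : ℝ) - ((a : ℕ) : ℝ)) * (((c : ℕ) : ℝ) - ((b : ℕ) : ℝ)) *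
    (((d : ℕ) : ℝ) - ((b : ℕ) : ℝ)) * (((d : ℕ) : ℝ) - ((c : ℕ) : ℝ)) / 12

/-- `ε_{ab}{}^{pq}`: the Levi-Civita tensor with its last two indices raised
by the Minkowski metric. -/
def levUp (a b p q : Fin 4) : ℝ := ∑ r, ∑ s, mink p r * mink q s * lev a b r s

/-- The Kronecker delta on `Fin 4`. -/
def kd (a b : Fin 4) : ℝ := if a = b then 1 else 0

/-- Hodge dual `⋆F_{ab} = (1/2) ε_{ab}{}^{pq} F_{pq}` of a rank-2 tensor. -/
def hodge2 (F : Fin 4 → Fin 4 → ℝ) (a b : Fin 4) : ℝ :=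
  (1/2) * ∑ p, ∑ q, levUp a b p q * F p q

/-- Left Hodge dual `←⋆X_{abcd} = (1/2) ε_{ab}{}^{pq} X_{pqcd}`. -/
def leftD (X : Fin 4 → Fin 4 → Fin 4 → Fin 4 → ℝ) (a b c d : Fin 4) : ℝ :=
  (1/2) * ∑ p, ∑ q, levUp a b p q * X p q c d

/-- Right Hodge dual `→⋆X_{abcd} = (1/2) ε_{cd}{}^{pq} X_{abpq}`. -/
def rightD (X : Fin 4 → Fin 4 → Fin 4 → Fin 4 → ℝ) (a b c d : Fin 4) : ℝ :=
  (1/2) * ∑ p, ∑ q, levUp c d p q * X a b p q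

/-- Double Hodge dual `⋆⋆X_{abcd} = (1/4) ε_{ab}{}^{pq} ε_{cd}{}^{rs} X_{pqrs}`. -/
def dblD (X : Fin 4 → Fin 4 → Fin 4 → Fin 4 → ℝ) (a b c d : Fin 4) : ℝ :=
  (1/4) * ∑ p, ∑ q, ∑ r, ∑ s, levUp a b p q * levUp c d r s * X p q r s

/-- First trace `X_{ac} = η^{bd} X_{abcd}` of a (2,2) double form. -/
def tr1 (X : Fin 4 → Fin 4 → Fin 4 → Fin 4 → ℝ) (a c : Fin 4) : ℝ :=
  ∑ b, ∑ d, mink b d * X a b c d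

/-- Second trace `X = η^{ac} X_{ac}` of a (2,2) double form. -/
def tr2 (X : Fin 4 → Fin 4 → Fin 4 → Fin 4 → ℝ) : ℝ :=
  ∑ a, ∑ c, mink a c * tr1 X a c

/-- Hatted (trace-free) tensor `X̂_{ab} = X_{ab} − (1/4) X η_{ab}`. -/
def hatT (X : Fin 4 → Fin 4 → Fin 4 → Fin 4 → ℝ) (a b : Fin 4) : ℝ :=
  tr1 X a b - (1/4) * tr2 X * mink a b

/-- Rank-2 tensor with both indices raised by the Minkowski metric. -/
def up2 (F : Fin 4 → Fin 4 → ℝ) (a b : Fin 4) : ℝ :=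
  ∑ p, ∑ q, mink a p * mink b q * F p q

/-- Rank-4 tensor with all indices raised by the Minkowski metric. -/
def up4 (X : Fin 4 → Fin 4 → Fin 4 → Fin 4 → ℝ) (a b c d : Fin 4) : ℝ :=
  ∑ p, ∑ q, ∑ r, ∑ s, mink a p * mink b q * mink c r * mink d s * X p q r s

/-- The diagonal entries of the Minkowski metric. -/
def minkSign (a : Fin 4) : ℝ := if a = 0 then 1 else -1

/-- The Minkowski pairing `F_{rs} G^{rs}` of rank-2 tensors. -/
def pairing (F G : Fin 4 → Fin 4 → ℝ) : ℝ :=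
  ∑ r, ∑ s, minkSign r * minkSign s * (F r s * G r s)

theorem mink_eq (a b : Fin 4) : mink a b = if a = b then minkSign a else 0 := rfl

theorem levUp_eq (a b p q : Fin 4) :
    levUp a b p q = minkSign p * minkSign q * lev a b p q := by
  simp [levUp, mink_eq]

theorem up4_eq (X : Fin 4 → Fin 4 → Fin 4 → Fin 4 → ℝ) (a b c d : Fin 4) :
    up4 X a b c d = minkSign a * minkSign b * minkSign c * minkSign d * X a b c d := by
  simp [up4, mink_eq]

theorem pairing_comm (F G : Fin 4 → Fin 4 → ℝ) : pairing F G = pairing G F := by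
  simp only [pairing, mul_comm (F _ _)]

theorem pairing_neg_left (F G : Fin 4 → Fin 4 → ℝ) : pairing (-F) G = -pairing F G := by
  simp [pairing, Finset.sum_neg_distrib]

theorem pairing_neg_right (F G : Fin 4 → Fin 4 → ℝ) : pairing F (-G) = -pairing F G := by
  simp [pairing, Finset.sum_neg_distrib]

theorem pairing_smul_left (c : ℝ) (F G : Fin 4 → Fin 4 → ℝ) :
    pairing (c • F) G = c * pairing F G := by
  simp only [pairing, Finset.mul_sum, Pi.smul_apply, smul_eq_mul]
  exact Finset.sum_congr rfl fun _ _ => Finset.sum_congr rfl fun _ _ => by ring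

theorem pairing_smul_right (c : ℝ) (F G : Fin 4 → Fin 4 → ℝ) :
    pairing F (c • G) = c * pairing F G := by
  rw [pairing_comm, pairing_smul_left, pairing_comm]

theorem pairing_zero_left (G : Fin 4 → Fin 4 → ℝ) : pairing 0 G = 0 := by
  simp [pairing]

theorem pairing_zero_right (F : Fin 4 → Fin 4 → ℝ) : pairing F 0 = 0 := by
  simp [pairing]

/-- The Hodge dual is self-adjoint for the Minkowski pairing. -/
theorem pairing_hodge2_left (F G : Fin 4 → Fin 4 → ℝ) :
    pairing (hodge2 F) G = pairing F (hodge2 G) := by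
  have hlev (a b c d : Fin 4) : lev a b c d = lev c d a b := by
    simp only [lev]
    ring
  have hL : pairing (hodge2 F) G = ∑ x : Fin 4 × Fin 4, ∑ y : Fin 4 × Fin 4,
      minkSign x.1 * minkSign x.2 * ((1/2) *
        (minkSign y.1 * minkSign y.2 * lev x.1 x.2 y.1 y.2 * F y.1 y.2) * G x.1 x.2) := by
    simp only [pairing, hodge2, levUp_eq, Fintype.sum_prod_type, Finset.mul_sum, Finset.sum_mul]
  have hR : pairing F (hodge2 G) = ∑ x : Fin 4 × Fin 4, ∑ y : Fin 4 × Fin 4,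
      minkSign x.1 * minkSign x.2 * (F x.1 x.2 * ((1/2) *
        (minkSign y.1 * minkSign y.2 * lev x.1 x.2 y.1 y.2 * G y.1 y.2))) := by
    simp only [pairing, hodge2, levUp_eq, Fintype.sum_prod_type, Finset.mul_sum]
  rw [hL, hR, Finset.sum_comm]
  refine Finset.sum_congr rfl fun x _ => Finset.sum_congr rfl fun y _ => ?_
  rw [hlev y.1 y.2 x.1 x.2]
  ring

theorem hodge2_skew (F : Fin 4 → Fin 4 → ℝ) (a b : Fin 4) : hodge2 F a b = -hodge2 F b a := by
  have hlev (p q : Fin 4) : lev a b p q = -lev b a p q := by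
    simp only [lev]
    ring
  simp [hodge2, levUp_eq, hlev, Finset.sum_neg_distrib]

/-- The independent components of the Hodge dual of a skew tensor. -/
theorem hodge2_components {F : Fin 4 → Fin 4 → ℝ} (hF : ∀ a b, F a b = -F b a) :
    hodge2 F 0 1 = F 2 3 ∧ hodge2 F 0 2 = -F 1 3 ∧ hodge2 F 0 3 = F 1 2 ∧
      hodge2 F 1 2 = -F 0 3 ∧ hodge2 F 1 3 = F 0 2 ∧ hodge2 F 2 3 = -F 0 1 := by
  refine ⟨?_, ?_, ?_, ?_, ?_, ?_⟩ <;>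
    simp [hodge2, levUp_eq, lev, minkSign, Fin.sum_univ_four,
      hF 1 0, hF 2 0, hF 3 0, hF 2 1, hF 3 1, hF 3 2] <;>
    ring

/-- In Lorentzian signature the Hodge dual squares to `-1` on skew tensors. -/
theorem hodge2_hodge2 {F : Fin 4 → Fin 4 → ℝ} (hF : ∀ a b, F a b = -F b a) :
    hodge2 (hodge2 F) = -F := by
  obtain ⟨h01, h02, h03, h12, h13, h23⟩ := hodge2_components hF
  obtain ⟨k01, k02, k03, k12, k13, k23⟩ := hodge2_components (hodge2_skew F)
  have hs := hodge2_skew (hodge2 F)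
  have hd (a : Fin 4) : F a a = 0 := by linarith [hF a a]
  have hd' (a : Fin 4) : hodge2 (hodge2 F) a a = 0 := by linarith [hs a a]
  funext a b
  fin_cases a <;> fin_cases b <;>
    simp [hd, hd', hF 1 0, hF 2 0, hF 3 0, hF 2 1, hF 3 1, hF 3 2,
      hs 1 0, hs 2 0, hs 3 0, hs 2 1, hs 3 1, hs 3 2,
      h01, h02, h03, h12, h13, h23, k01, k02, k03, k12, k13, k23]

/-- If the left and right duals of a double form agree up to a sign, the contraction
`X_{a k₁k₂k₃} X_b{}^{k₁k₂k₃}` is a multiple of the metric. -/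
theorem sum_pairing_eq_of_leftD_eq (X : Fin 4 → Fin 4 → Fin 4 → Fin 4 → ℝ)
    (h1 : ∀ a b c d, X a b c d = -X b a c d)
    (h2 : ∀ a b c d, X a b c d = -X a b d c) {σ : ℝ} (hσ : σ * σ = 1)
    (hD : ∀ a b c d, leftD X a b c d = σ * rightD X a b c d) (a b : Fin 4) :
    ∑ k, minkSign k * pairing (X a k) (X b k) =
      (1/4) * (∑ p, ∑ q, minkSign p * minkSign q * pairing (X p q) (X p q)) * mink a b := by
  have hs (a b) : X a b = -X b a := by funext c d; exact h1 a b c d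
  have hd (a) : X a a = 0 := by funext c d; simpa using self_eq_neg.mp (h1 a a c d)
  have h23 : X 2 3 = σ • hodge2 (X 0 1) := by
    funext c d
    have h := hD 0 1 c d
    simp [leftD, levUp_eq, lev, minkSign, Fin.sum_univ_four, h1 3 2] at h
    change X 2 3 c d = σ * rightD X 0 1 c d
    linarith
  have h13 : X 1 3 = -(σ • hodge2 (X 0 2)) := by
    funext c d
    have h := hD 0 2 c d
    simp [leftD, levUp_eq, lev, minkSign, Fin.sum_univ_four, h1 3 1] at h
    change X 1 3 c d = -(σ * rightD X 0 2 c d)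
    linarith
  have h12 : X 1 2 = σ • hodge2 (X 0 3) := by
    funext c d
    have h := hD 0 3 c d
    simp [leftD, levUp_eq, lev, minkSign, Fin.sum_univ_four, h1 2 1] at h
    change X 1 2 c d = σ * rightD X 0 3 c d
    linarith
  have hdual (i j k l) : pairing (hodge2 (X i j)) (hodge2 (X k l)) =
      -pairing (X i j) (X k l) := by
    rw [pairing_hodge2_left, hodge2_hodge2 (h2 k l), pairing_neg_right]
  have hσ' (x : ℝ) : σ * (σ * x) = x := by rw [← mul_assoc, hσ, one_mul]
  fin_cases a <;> fin_cases b <;>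
    simp [Fin.sum_univ_four, hd, hs 1 0, hs 2 0, hs 3 0, hs 2 1, hs 3 1, hs 3 2, h23, h13, h12,
      pairing_neg_left, pairing_neg_right, pairing_smul_left, pairing_smul_right,
      pairing_zero_left, pairing_zero_right, hdual, hσ', mink, minkSign] <;>
    (try simp only [pairing_hodge2_left, pairing_comm (X 0 2) (X 0 1), pairing_comm (X 0 3) (X 0 1),
      pairing_comm (X 0 3) (X 0 2), pairing_comm (X 0 2) (hodge2 (X 0 1)),
      pairing_comm (X 0 3) (hodge2 (X 0 1)), pairing_comm (X 0 3) (hodge2 (X 0 2))]) <;>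
    ring

/-- Generalised Lanczos identity: for an irreducible (2,2) double form `X`
(one which, together with its right Hodge dual, is either symmetric or
antisymmetric under interchange of the two skew pairs),
`X^{a k₁k₂k₃} X_{b k₁k₂k₃} = I δ^{a}_{b}` with `I = (1/4) X_{pqrs} X^{pqrs}`. -/
theorem generalised_lanczos (X : Fin 4 → Fin 4 → Fin 4 → Fin 4 → ℝ)
    (h1 : ∀ a b c d, X a b c d = -X b a c d)
    (h2 : ∀ a b c d, X a b c d = -X a b d c)
    (hirr : ∃ e e' : ℝ, (e = 1 ∨ e = -1) ∧ (e' = 1 ∨ e' = -1) ∧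
      (∀ a b c d, X c d a b = e * X a b c d) ∧
      (∀ a b c d, rightD X c d a b = e' * rightD X a b c d)) :
    ∀ a b, (∑ k₁, ∑ k₂, ∑ k₃, up4 X a k₁ k₂ k₃ * X b k₁ k₂ k₃) =
      ((1/4) * ∑ p, ∑ q, ∑ r, ∑ s, X p q r s * up4 X p q r s) * kd a b := by
  obtain ⟨e, e', he, he', hX, hR⟩ := hirr
  have hee : e * e = 1 := by rcases he with rfl | rfl <;> norm_num
  have hee' : e' * e' = 1 := by rcases he' with rfl | rfl <;> norm_num
  have hD (a b c d) : leftD X a b c d = e * e' * rightD X a b c d := by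
    have hL : rightD X c d a b = e * leftD X a b c d := by
      simp only [rightD, leftD, Finset.mul_sum]
      refine Finset.sum_congr rfl fun p _ => Finset.sum_congr rfl fun q _ => ?_
      rw [hX p q c d]
      ring
    linear_combination (-leftD X a b c d) * hee + e * (hR a b c d) - e * hL
  intro a b
  have key := sum_pairing_eq_of_leftD_eq X h1 h2 (σ := e * e')
    (by linear_combination e' * e' * hee + hee') hD a b
  have hsum (a b : Fin 4) : ∑ k₁, ∑ k₂, ∑ k₃, up4 X a k₁ k₂ k₃ * X b k₁ k₂ k₃ =
      minkSign a * ∑ k, minkSign k * pairing (X a k) (X b k) := by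
    simp only [up4_eq, pairing, Finset.mul_sum]
    refine Finset.sum_congr rfl fun _ _ => Finset.sum_congr rfl fun _ _ =>
      Finset.sum_congr rfl fun _ _ => ?_
    ring
  have htrace : ∑ p, ∑ q, ∑ r, ∑ s, X p q r s * up4 X p q r s =
      ∑ p, ∑ q, minkSign p * minkSign q * pairing (X p q) (X p q) := by
    simp only [up4_eq, pairing, Finset.mul_sum]
    refine Finset.sum_congr rfl fun _ _ => Finset.sum_congr rfl fun _ _ =>
      Finset.sum_congr rfl fun _ _ => Finset.sum_congr rfl fun _ _ => ?_
    ring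
  have hkd : minkSign a * mink a b = kd a b := by
    simp only [mink, minkSign, kd]
    split_ifs <;> norm_num
  rw [hsum, key, htrace, ← hkd]
  ring
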